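/- arXiv:1704.08226 — 5 statements merged into one kernel-verified Lean document; each statement's English description precedes it below -/
import Mathlib

section
/- Let V be a finite-dimensional complex inner product space with dim_ℂ V = n, with Hermitian inner product h, real part g = Re h, and J multiplication by i. Let π ⊆ V be a totally real subspace of real dimension n with projections π_L, π_J, and let e₁, …, eₙ be a basis of π that is orthonormal with respect to g. Then for every ℂ-linear map B : V → V, the complex trace of B satisfies tr_ℂ B = Σᵢ ( g(π_L(B eᵢ), eᵢ) − i · g(J π_J(B eᵢ), eᵢ) ). -/
/-- Multiplication by the imaginary unit `i`, as an `ℝ`-linear endomorphism of a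
complex vector space `V`. -/
noncomputable def Jmap (V : Type*) [AddCommGroup V] [Module ℂ V] : V →ₗ[ℝ] V :=
  (Complex.I • (LinearMap.id : V →ₗ[ℂ] V)).restrictScalars ℝ

/-!
Orthonormality gives `u = ∑ g(u, eᵢ) eᵢ` for `u ∈ π`. Applied to `π_L v` and to `J π_J v`, both of
which lie in `π`, it yields `v = π_L v - J (J π_J v) = ∑ (g(π_L v, eᵢ) - i g(J π_J v, eᵢ)) eᵢ`.
So the `n` vectors `eᵢ` span `V` over `ℂ`, hence form a complex basis, and the coefficients are the
coordinates of `v`; the trace sums the `i`-th coordinate of `B eᵢ`.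
-/

section Coordinates

variable {ι : Type*} [Fintype ι]

theorem sum_dual_smul_eq_of_mem_span {R M : Type*} [CommSemiring R] [AddCommMonoid M] [Module R M]
    [DecidableEq ι] {e : ι → M} {φ : ι → Module.Dual R M}
    (hφ : ∀ i j, φ j (e i) = if i = j then 1 else 0) {w : M}
    (hw : w ∈ Submodule.span R (Set.range e)) : ∑ i, φ i w • e i = w := by
  obtain ⟨c, rfl⟩ := (Submodule.mem_span_range_iff_exists_fun R).mp hw
  simp [hφ]

theorem trace_eq_sum_of_forall_sum_smul_eq {R M : Type*} [CommRing R] [AddCommGroup M]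
    [Module R M] (hcard : Module.finrank R M = Fintype.card ι) {e : ι → M} {c : M → ι → R}
    (hc : ∀ v, ∑ i, c v i • e i = v) (f : M →ₗ[R] M) :
    LinearMap.trace R M f = ∑ i, c (f (e i)) i := by
  classical
  have hspan : ⊤ ≤ Submodule.span R (Set.range e) := fun v _ ↦
    (Submodule.mem_span_range_iff_exists_fun R).mpr ⟨c v, hc v⟩
  let b : Module.Basis ι R M := basisOfTopLeSpanOfCardEqFinrank e hspan hcard.symm
  have hb : ⇑b = e := coe_basisOfTopLeSpanOfCardEqFinrank e hspan hcard.symm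
  have hrepr (v : M) : ⇑(b.repr v) = c v := by
    conv_lhs => rw [← hc v, ← hb]
    exact b.repr_sum_self (c v)
  simp [LinearMap.trace_eq_matrix_trace R b, Matrix.trace, LinearMap.toMatrix_apply, hrepr, hb]

end Coordinates

section JDecomposition

variable {V : Type*} [AddCommGroup V] [Module ℂ V] {π : Submodule ℝ V}

theorem I_smul_mem_of_mem_map_Jmap {w : V} (hw : w ∈ π.map (Jmap V)) : Complex.I • w ∈ π := by
  obtain ⟨u, hu, rfl⟩ := hw
  have hJJ : Complex.I • Jmap V u = -u := by simp [Jmap, smul_smul]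
  exact hJJ ▸ π.neg_mem hu

variable {ι : Type*} [Fintype ι] [DecidableEq ι] {e : ι → V}

theorem sum_dual_sub_I_mul_dual_smul_eq_add {φ : ι → Module.Dual ℝ V}
    (hspan : Submodule.span ℝ (Set.range e) = π)
    (hφ : ∀ i j, φ j (e i) = if i = j then 1 else 0)
    {u w : V} (hu : u ∈ π) (hw : w ∈ π.map (Jmap V)) :
    ∑ i, ((φ i u : ℂ) - Complex.I * (φ i (Complex.I • w) : ℂ)) • e i = u + w := by
  subst hspan
  calc
    _ = ∑ i, φ i u • e i - Complex.I • ∑ i, φ i (Complex.I • w) • e i := by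
      simp only [sub_smul, mul_smul, Complex.coe_smul, Finset.sum_sub_distrib, Finset.smul_sum]
    _ = u - Complex.I • Complex.I • w := by
      rw [sum_dual_smul_eq_of_mem_span hφ hu,
        sum_dual_smul_eq_of_mem_span hφ (I_smul_mem_of_mem_map_Jmap hw)]
    _ = u + w := by simp [smul_smul]

theorem stmt4_general (hn : Module.finrank ℂ V = Fintype.card ι) {πL πJ : V → V}
    (hπL : ∀ v, πL v ∈ π) (hπJ : ∀ v, πJ v ∈ π.map (Jmap V)) (hsum : ∀ v, πL v + πJ v = v)
    (hspan : Submodule.span ℝ (Set.range e) = π) {g : LinearMap.BilinForm ℝ V}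
    (hON : ∀ i j, g (e i) (e j) = if i = j then 1 else 0) (B : V →ₗ[ℂ] V) :
    LinearMap.trace ℂ V B =
      ∑ i, ((g (πL (B (e i))) (e i) : ℂ)
        - Complex.I * (g (Complex.I • πJ (B (e i))) (e i) : ℂ)) := by
  have expansion (v : V) : ∑ i, ((g (πL v) (e i) : ℂ)
      - Complex.I * (g (Complex.I • πJ v) (e i) : ℂ)) • e i = v :=
    (sum_dual_sub_I_mul_dual_smul_eq_add (φ := fun i ↦ g.flip (e i)) hspan hON
      (hπL v) (hπJ v)).trans (hsum v)
  exact trace_eq_sum_of_forall_sum_smul_eq hn expansion B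

end JDecomposition

/-- Let `π` be a totally real `n`-plane in an `n`-dimensional complex inner product space
`(V, h)`, with projections `π_L, π_J` onto `π` and `Jπ`, and let `e₁, …, eₙ` be a basis of
`π` orthonormal for `g = Re h`.  Then for any `ℂ`-linear `B : V → V`,
`tr_ℂ B = Σᵢ ( g(π_L(B eᵢ), eᵢ) − i·g(J π_J(B eᵢ), eᵢ) )`. -/
theorem stmt4 {V : Type*} [NormedAddCommGroup V] [InnerProductSpace ℂ V]
    [FiniteDimensional ℂ V] {n : ℕ} (hn : Module.finrank ℂ V = n)
    (π : Submodule ℝ V) (hπn : Module.finrank ℝ π = n)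
    (hTR : π ⊓ π.map (Jmap V) = ⊥)
    (πL πJ : V →ₗ[ℝ] V)
    (hπL : ∀ v, πL v ∈ π) (hπJ : ∀ v, πJ v ∈ π.map (Jmap V))
    (hsum : ∀ v, πL v + πJ v = v)
    (e : Fin n → V) (he : ∀ i, e i ∈ π)
    (hspan : Submodule.span ℝ (Set.range e) = π)
    (hON : ∀ i j, (inner ℂ (e i) (e j) : ℂ).re = if i = j then 1 else 0)
    (B : V →ₗ[ℂ] V) :
    LinearMap.trace ℂ V B =
      ∑ i, (((inner ℂ (πL (B (e i))) (e i) : ℂ).re : ℂ)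
        - Complex.I * ((inner ℂ (Complex.I • πJ (B (e i))) (e i) : ℂ).re : ℂ)) :=
  letI : InnerProductSpace ℝ V := InnerProductSpace.complexToReal
  stmt4_general (hn.trans (Fintype.card_fin n).symm) hπL hπJ hsum hspan (g := innerₗ V) hON B
end

section
/- Let V be a finite-dimensional complex inner product space with dim_ℂ V = n, g = Re h, and J multiplication by i. Let π ⊆ V be a totally real subspace of real dimension n with projections π_L, π_J, and let e₁, …, eₙ be a g-orthonormal basis of π. If B : V → V is a ℂ-linear map whose complex trace tr_ℂ B is a real number, then Σᵢ g(J π_J(B eᵢ), eᵢ) = 0. -/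
/-!
A real basis `e` of a totally real `π` with `π + Jπ = V` is a complex basis of `V`. In complex
coordinates with respect to `e`, the plane `π` consists of the vectors with real coordinates and
`Jπ` of those with imaginary coordinates, so `g(J π_J v, eᵢ)` is minus the imaginary part of the
`i`-th coordinate of `v`. Taking `v = B eᵢ` and summing over `i` gives `-Im (tr_ℂ B)`.
-/

section Jmap

variable {V : Type*} [AddCommGroup V] [Module ℂ V]

@[simp]
theorem Jmap_apply (v : V) : Jmap V v = Complex.I • v := rfl

theorem sum_complex_smul_eq_add_Jmap {ι : Type*} (s : Finset ι) (c : ι → ℂ) (e : ι → V) :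
    ∑ i ∈ s, c i • e i = ∑ i ∈ s, (c i).re • e i + Jmap V (∑ i ∈ s, (c i).im • e i) := by
  simp only [Jmap_apply, Finset.smul_sum, ← Finset.sum_add_distrib]
  refine Finset.sum_congr rfl fun i _ => ?_
  rw [← Complex.coe_smul, ← Complex.coe_smul, smul_smul, ← add_smul, mul_comm, Complex.re_add_im]

theorem linearIndependent_complex_of_disjoint_map_Jmap {ι : Type*} {e : ι → V}
    (he : LinearIndependent ℝ e)
    (hdisj : Disjoint (Submodule.span ℝ (Set.range e))
      ((Submodule.span ℝ (Set.range e)).map (Jmap V))) :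
    LinearIndependent ℂ e := by
  rw [linearIndependent_iff'] at he ⊢
  intro s c hc i hi
  have sum_mem (a : ι → ℝ) : ∑ j ∈ s, a j • e j ∈ Submodule.span ℝ (Set.range e) :=
    Submodule.sum_smul_mem _ _ fun j _ => Submodule.subset_span (Set.mem_range_self j)
  rw [sum_complex_smul_eq_add_Jmap] at hc
  have hre : ∑ j ∈ s, (c j).re • e j = 0 :=
    Submodule.disjoint_def.mp hdisj _ (sum_mem _) <| by
      rw [eq_neg_of_add_eq_zero_left hc]
      exact neg_mem (Submodule.mem_map_of_mem (sum_mem _))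
  have him : ∑ j ∈ s, (c j).im • e j = 0 := by
    simpa only [hre, zero_add, Jmap_apply, smul_eq_zero, Complex.I_ne_zero, false_or] using hc
  exact Complex.ext (he s _ hre i hi) (he s _ him i hi)

theorem sup_map_Jmap_span_real_le_span_complex (s : Set V) :
    Submodule.span ℝ s ⊔ (Submodule.span ℝ s).map (Jmap V) ≤
      (Submodule.span ℂ s).restrictScalars ℝ := by
  have hle := Submodule.span_le_restrictScalars ℝ ℂ s
  refine sup_le hle (Submodule.map_le_iff_le_comap.mpr fun v hv => ?_)
  exact Submodule.smul_mem _ Complex.I (hle hv)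

end Jmap

section RealSpan

variable {V ι : Type*} [AddCommGroup V] [Module ℂ V] (b : Module.Basis ι ℂ V)

theorem im_repr_eq_zero_of_mem_span_real {x : V}
    (hx : x ∈ Submodule.span ℝ (Set.range b)) (i : ι) : (b.repr x i).im = 0 := by
  obtain ⟨r, hr⟩ := (b.mem_span_iff_repr_mem ℝ x).mp hx i
  rw [← hr, Complex.coe_algebraMap, Complex.ofReal_im]

variable [DecidableEq ι] {g : LinearMap.BilinForm ℝ V}

theorem bilin_basis_eq_re_repr_of_mem_span_real
    (hg : ∀ i j, g (b i) (b j) = if i = j then 1 else 0) {x : V}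
    (hx : x ∈ Submodule.span ℝ (Set.range b)) (i : ι) : g x (b i) = (b.repr x i).re := by
  let coordRe : V →ₗ[ℝ] ℝ := Complex.reLm ∘ₗ (b.coord i).restrictScalars ℝ
  refine LinearMap.eqOn_span (f := g.flip (b i)) (g := coordRe) ?_ hx
  rintro _ ⟨j, rfl⟩
  simp [coordRe, hg, Finsupp.single_apply, apply_ite Complex.re]

theorem bilin_I_smul_basis_eq_neg_im_repr
    (hg : ∀ i j, g (b i) (b j) = if i = j then 1 else 0) {x y : V}
    (hx : x ∈ Submodule.span ℝ (Set.range b))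
    (hy : y ∈ (Submodule.span ℝ (Set.range b)).map (Jmap V)) (i : ι) :
    g (Complex.I • y) (b i) = -(b.repr (x + y) i).im := by
  have hIy : Complex.I • y ∈ Submodule.span ℝ (Set.range b) := by
    obtain ⟨w, hw, rfl⟩ := hy
    simpa [smul_smul] using hw
  calc g (Complex.I • y) (b i)
      = (b.repr (Complex.I • y) i).re := bilin_basis_eq_re_repr_of_mem_span_real b hg hIy i
    _ = -(b.repr y i).im := by simp
    _ = -(b.repr (x + y) i).im := by simp [im_repr_eq_zero_of_mem_span_real b hx i]

end RealSpan

theorem trace_eq_sum_repr {R M ι : Type*} [CommRing R] [AddCommGroup M] [Module R M] [Fintype ι]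
    (b : Module.Basis ι R M) (f : M →ₗ[R] M) :
    LinearMap.trace R M f = ∑ i, b.repr (f (b i)) i := by
  classical
  simp [LinearMap.trace_eq_matrix_trace R b, Matrix.trace, LinearMap.toMatrix_apply]

theorem stmt5_general {V ι : Type*} [AddCommGroup V] [Module ℂ V] [Fintype ι] [DecidableEq ι]
    (g : LinearMap.BilinForm ℝ V) (π : Submodule ℝ V) (hTR : Disjoint π (π.map (Jmap V)))
    (πL πJ : V → V) (hπL : ∀ v, πL v ∈ π) (hπJ : ∀ v, πJ v ∈ π.map (Jmap V))
    (hsum : ∀ v, πL v + πJ v = v)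
    (e : ι → V) (hspan : Submodule.span ℝ (Set.range e) = π)
    (hON : ∀ i j, g (e i) (e j) = if i = j then 1 else 0) (B : V →ₗ[ℂ] V) :
    ∑ i, g (Complex.I • πJ (B (e i))) (e i) = -(LinearMap.trace ℂ V B).im := by
  subst hspan
  have hreal : LinearIndependent ℝ e :=
    LinearIndependent.of_pairwise_dual_eq_zero_one e (fun i => g (e i))
      (fun i j hij => by simp only [hON, if_neg hij]) (fun i => by simp only [hON, if_true])
  have hindep : LinearIndependent ℂ e := linearIndependent_complex_of_disjoint_map_Jmap hreal hTR
  have htop : ⊤ ≤ Submodule.span ℂ (Set.range e) := fun v _ =>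
    sup_map_Jmap_span_real_le_span_complex _ <|
      hsum v ▸ Submodule.add_mem_sup (hπL v) (hπJ v)
  obtain ⟨b, rfl⟩ : ∃ b : Module.Basis ι ℂ V, ⇑b = e :=
    ⟨.mk hindep htop, Module.Basis.coe_mk hindep htop⟩
  have hcoord (v : V) (i : ι) : g (Complex.I • πJ v) (b i) = -(b.repr v i).im := by
    simpa only [hsum] using bilin_I_smul_basis_eq_neg_im_repr b hON (hπL v) (hπJ v) i
  simp only [hcoord, Finset.sum_neg_distrib, trace_eq_sum_repr b B, Complex.im_sum]

/-- Let `π` be a totally real `n`-plane in an `n`-dimensional complex inner product space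
`(V, h)`, with projections `π_L, π_J`, and `e₁, …, eₙ` a `g`-orthonormal basis of `π`,
where `g = Re h`.  If the complex trace of a `ℂ`-linear map `B : V → V` is real, then
`Σᵢ g(J π_J(B eᵢ), eᵢ) = 0`. -/
theorem stmt5 {V : Type*} [NormedAddCommGroup V] [InnerProductSpace ℂ V]
    [FiniteDimensional ℂ V] {n : ℕ} (hn : Module.finrank ℂ V = n)
    (π : Submodule ℝ V) (hπn : Module.finrank ℝ π = n)
    (hTR : π ⊓ π.map (Jmap V) = ⊥)
    (πL πJ : V →ₗ[ℝ] V)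
    (hπL : ∀ v, πL v ∈ π) (hπJ : ∀ v, πJ v ∈ π.map (Jmap V))
    (hsum : ∀ v, πL v + πJ v = v)
    (e : Fin n → V) (he : ∀ i, e i ∈ π)
    (hspan : Submodule.span ℝ (Set.range e) = π)
    (hON : ∀ i j, (inner ℂ (e i) (e j) : ℂ).re = if i = j then 1 else 0)
    (B : V →ₗ[ℂ] V) (htr : (LinearMap.trace ℂ V B).im = 0) :
    ∑ i, (inner ℂ (Complex.I • πJ (B (e i))) (e i) : ℂ).re = 0 := by
  let : InnerProductSpace ℝ V := .complexToReal
  exact (stmt5_general (innerₗ V) π (disjoint_iff.mpr hTR) πL πJ hπL hπJ hsum e hspan hON B).trans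
    (by rw [htr, neg_zero])
end

section
/- Let A : ℝ → Matrix (Fin n) (Fin n) ℂ be a curve of complex n×n matrices that is differentiable at t₀, with A(t₀) invertible, and suppose that for all t in a neighbourhood of t₀ the determinant det(A(t)) is a real number. Then the complex number tr( A(t₀)⁻¹ · A′(t₀) ) is real, where A′(t₀) denotes the derivative of A at t₀. -/
/-!
The determinant is multilinear in the rows, so its derivative along `A` is the sum over `i` of the
determinants of `A` with row `i` replaced by row `i` of `A'`; by Cramer's rule this is
`tr (adj A * A') = det A * tr (A⁻¹ * A')`. If `det A` takes values in a closed subfield containing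
the scalars on a set accumulating at `t₀`, then its value at `t₀` and its derivative there, a limit
of difference quotients, lie in that subfield, and hence so does their quotient `tr (A⁻¹ * A')`.
-/

open Filter Topology

section Jacobi

variable {𝕜 R m : Type*} [Fintype m] [DecidableEq m]

theorem sum_det_updateRow_eq_trace_adjugate_mul [CommRing R] (A B : Matrix m m R) :
    ∑ i, (A.updateRow i (B i)).det = (A.adjugate * B).trace := by
  have det_updateRow (i : m) : (A.updateRow i (B i)).det = (B * A.adjugate) i i := by
    rw [← Matrix.cramer_transpose_apply, Matrix.cramer_eq_adjugate_mulVec,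
      ← Matrix.adjugate_transpose, Matrix.mulVec_transpose, Matrix.mul_apply_eq_vecMul]
  rw [Matrix.trace_mul_comm]
  exact Finset.sum_congr rfl fun i _ ↦ det_updateRow i

variable [NontriviallyNormedField 𝕜] [NormedCommRing R] [NormedAlgebra 𝕜 R]
  {A : 𝕜 → Matrix m m R} {A' : Matrix m m R} {t₀ : 𝕜}

theorem hasDerivAt_det (hA : ∀ i j, HasDerivAt (fun t ↦ A t i j) (A' i j) t₀) :
    HasDerivAt (fun t ↦ (A t).det) ((A t₀).adjugate * A').trace t₀ := by
  let detRows : ContinuousMultilinearMap 𝕜 (fun _ : m ↦ m → R) R :=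
    { Matrix.detRowAlternating.toMultilinearMap.restrictScalars 𝕜 with
      cont := Continuous.matrix_det continuous_id }
  have rows_hasDerivAt : HasDerivAt (fun t i ↦ A t i) (fun i ↦ A' i) t₀ :=
    hasDerivAt_pi.2 fun i ↦ hasDerivAt_pi.2 (hA i)
  have linearDeriv_eq : detRows.linearDeriv (A t₀) A' = ((A t₀).adjugate * A').trace :=
    (detRows.linearDeriv_apply (A t₀) A').trans (sum_det_updateRow_eq_trace_adjugate_mul _ _)
  exact ((detRows.hasFDerivAt (A t₀)).comp_hasDerivAt t₀ rows_hasDerivAt).congr_deriv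
    linearDeriv_eq

theorem hasDerivAt_det_of_isUnit (hA : ∀ i j, HasDerivAt (fun t ↦ A t i j) (A' i j) t₀)
    (hdet : IsUnit (A t₀).det) :
    HasDerivAt (fun t ↦ (A t).det) ((A t₀).det * ((A t₀)⁻¹ * A').trace) t₀ := by
  have adjugate_eq : (A t₀).adjugate = (A t₀).det • (A t₀)⁻¹ := by
    rw [Matrix.inv_def, smul_smul, Ring.mul_inverse_cancel _ hdet, one_smul]
  have det_hasDerivAt := hasDerivAt_det hA
  rwa [adjugate_eq, Matrix.smul_mul, Matrix.trace_smul, smul_eq_mul] at det_hasDerivAt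

end Jacobi

theorem mem_of_continuousAt_of_frequently_mem {X Y : Type*} [TopologicalSpace X]
    [TopologicalSpace Y] {s : Set Y} {f : X → Y} {x : X} (hf : ContinuousAt f x)
    (hs : IsClosed s) (hfs : ∃ᶠ t in 𝓝[≠] x, f t ∈ s) : f x ∈ s :=
  hs.mem_of_frequently_of_tendsto hfs (hf.tendsto.mono_left nhdsWithin_le_nhds)

theorem mem_of_hasDerivAt_of_frequently_mem {𝕜 E : Type*} [NontriviallyNormedField 𝕜]
    [NormedAddCommGroup E] [NormedSpace 𝕜 E] {V : Submodule 𝕜 E} {f : 𝕜 → E} {f' : E} {x : 𝕜}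
    (hf : HasDerivAt f f' x) (hV : IsClosed (V : Set E)) (hfV : ∃ᶠ t in 𝓝[≠] x, f t ∈ V) :
    f' ∈ V := by
  have hfx : f x ∈ V := mem_of_continuousAt_of_frequently_mem hf.continuousAt hV hfV
  have slope_mem : ∃ᶠ t in 𝓝[≠] x, slope f x t ∈ V :=
    hfV.mono fun _ ht ↦ V.smul_mem _ (V.sub_mem ht hfx)
  exact hV.mem_of_frequently_of_tendsto slope_mem hf.tendsto_slope

theorem isClosed_intermediateField_of_finiteDimensional {𝕜 L : Type*} [NontriviallyNormedField 𝕜]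
    [CompleteSpace 𝕜] [NormedField L] [NormedAlgebra 𝕜 L] (K : IntermediateField 𝕜 L)
    [FiniteDimensional 𝕜 K] : IsClosed (K : Set L) :=
  K.toSubalgebra.toSubmodule.closed_of_finiteDimensional

theorem mem_bot_intermediateField_iff_im_eq_zero {z : ℂ} :
    z ∈ (⊥ : IntermediateField ℝ ℂ) ↔ z.im = 0 := by
  rw [IntermediateField.mem_bot]
  exact ⟨fun ⟨r, hr⟩ ↦ hr ▸ Complex.ofReal_im r, fun hz ↦ ⟨z.re, Complex.ext rfl hz.symm⟩⟩

theorem stmt6_general {𝕜 L m : Type*} [NontriviallyNormedField 𝕜] [NormedField L]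
    [NormedAlgebra 𝕜 L] [Fintype m] [DecidableEq m] {K : IntermediateField 𝕜 L}
    (hK : IsClosed (K : Set L)) {A : 𝕜 → Matrix m m L} {A' : Matrix m m L} {t₀ : 𝕜}
    (hderiv : ∀ i j, HasDerivAt (fun t ↦ A t i j) (A' i j) t₀) (hinv : IsUnit (A t₀).det)
    (hdet : ∃ᶠ t in 𝓝[≠] t₀, (A t).det ∈ K) :
    ((A t₀)⁻¹ * A').trace ∈ K := by
  have jacobi := hasDerivAt_det_of_isUnit hderiv hinv
  have det_mem : (A t₀).det ∈ K :=
    mem_of_continuousAt_of_frequently_mem (f := fun t ↦ (A t).det) jacobi.continuousAt hK hdet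
  have deriv_mem : (A t₀).det * ((A t₀)⁻¹ * A').trace ∈ K :=
    mem_of_hasDerivAt_of_frequently_mem (V := K.toSubalgebra.toSubmodule) jacobi hK hdet
  simpa only [inv_mul_cancel_left₀ hinv.ne_zero] using K.mul_mem (K.inv_mem det_mem) deriv_mem

/-- If `A(t)` is a curve of complex `n×n` matrices, differentiable at `t₀` with derivative
`A'`, such that `A(t₀)` is invertible and `det A(t)` is real for all `t` near `t₀`, then
`tr(A(t₀)⁻¹ · A')` is a real number. -/
theorem stmt6 {n : ℕ} (A : ℝ → Matrix (Fin n) (Fin n) ℂ)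
    (A' : Matrix (Fin n) (Fin n) ℂ) (t₀ : ℝ)
    (hderiv : ∀ i j, HasDerivAt (fun t => A t i j) (A' i j) t₀)
    (hinv : IsUnit (A t₀).det)
    (hre : ∀ᶠ t in nhds t₀, ((A t).det).im = 0) :
    (((A t₀)⁻¹ * A').trace).im = 0 := by
  simp only [← mem_bot_intermediateField_iff_im_eq_zero] at hre ⊢
  exact stmt6_general (isClosed_intermediateField_of_finiteDimensional ⊥) hderiv hinv
    (hre.filter_mono nhdsWithin_le_nhds).frequently
end

section
/- Let A be a real antisymmetric n×n matrix (Aᵀ = −A) and consider the complex matrix H = Iₙ − i·A, where Iₙ is the identity and i the imaginary unit. Then: (1) H is Hermitian and det H is a real number; (2) if H is positive definite, then 0 < det H ≤ 1, with det H = 1 if and only if A = 0. -/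
open Matrix
open scoped ComplexOrder

/-- The complex matrix `H = Iₙ − i·A` associated to a real matrix `A`. -/
noncomputable def hermOf {n : ℕ} (A : Matrix (Fin n) (Fin n) ℝ) :
    Matrix (Fin n) (Fin n) ℂ :=
  1 - Complex.I • A.map Complex.ofReal

/-!
Every real `x` satisfies `x ≤ exp (x - 1)`, with equality only at `x = 1`. Multiplying over the
eigenvalues of a positive semidefinite `n × n` matrix `H` gives `det H ≤ exp (tr H - n)`, with
equality only at `H = 1`. An antisymmetric `A` has trace zero, so `H = 1 - i A` has trace `n` and
the right-hand side is `1`.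
-/

theorem le_exp_sub_one (x : ℝ) : x ≤ Real.exp (x - 1) := by
  simpa using Real.add_one_le_exp (x - 1)

theorem lt_exp_sub_one {x : ℝ} (hx : x ≠ 1) : x < Real.exp (x - 1) := by
  simpa using Real.add_one_lt_exp (sub_ne_zero.mpr hx)

section Product

variable {ι : Type*} {s : Finset ι} {x : ι → ℝ}

theorem prod_le_exp_sum_sub_one (hx : ∀ i ∈ s, 0 ≤ x i) :
    ∏ i ∈ s, x i ≤ Real.exp (∑ i ∈ s, (x i - 1)) := by
  rw [Real.exp_sum]
  exact Finset.prod_le_prod hx fun i _ => le_exp_sub_one (x i)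

theorem prod_eq_exp_sum_sub_one_iff (hx : ∀ i ∈ s, 0 ≤ x i) :
    ∏ i ∈ s, x i = Real.exp (∑ i ∈ s, (x i - 1)) ↔ ∀ i ∈ s, x i = 1 := by
  refine ⟨fun heq => ?_, fun h => ?_⟩
  · have hne : ∀ i ∈ s, x i ≠ 0 := Finset.prod_ne_zero_iff.mp (heq ▸ Real.exp_ne_zero _)
    by_contra! ⟨j, hj, hj_ne⟩
    have hlt : ∏ i ∈ s, x i < ∏ i ∈ s, Real.exp (x i - 1) :=
      Finset.prod_lt_prod (fun i hi => (hx i hi).lt_of_ne' (hne i hi))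
        (fun i _ => le_exp_sub_one (x i)) ⟨j, hj, lt_exp_sub_one hj_ne⟩
    exact hlt.ne (heq.trans (Real.exp_sum _ _))
  · rw [Finset.prod_eq_one h, Finset.sum_eq_zero fun i hi => sub_eq_zero.mpr (h i hi),
      Real.exp_zero]

end Product

section Hermitian

variable {𝕜 ι : Type*} [RCLike 𝕜] [Fintype ι] [DecidableEq ι] {H : Matrix ι ι 𝕜}

theorem det_eq_ofReal_prod_eigenvalues (hH : H.IsHermitian) :
    H.det = ((∏ i, hH.eigenvalues i : ℝ) : 𝕜) := by
  rw [hH.det_eq_prod_eigenvalues, RCLike.ofReal_prod]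

theorem re_det_eq_prod_eigenvalues (hH : H.IsHermitian) :
    RCLike.re H.det = ∏ i, hH.eigenvalues i := by
  rw [det_eq_ofReal_prod_eigenvalues hH, RCLike.ofReal_re]

theorem im_det_eq_zero_of_isHermitian (hH : H.IsHermitian) : RCLike.im H.det = 0 := by
  rw [det_eq_ofReal_prod_eigenvalues hH, RCLike.ofReal_im]

theorem re_trace_sub_card_eq_sum_eigenvalues_sub_one (hH : H.IsHermitian) :
    RCLike.re H.trace - Fintype.card ι = ∑ i, (hH.eigenvalues i - 1) := by
  simp [hH.trace_eq_sum_eigenvalues]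

theorem eigenvalues_eq_one_iff (hH : H.IsHermitian) :
    hH.eigenvalues = 1 ↔ H = 1 := by
  refine ⟨fun h => ?_, fun h => ?_⟩
  · rw [hH.spectral_theorem, h, Pi.comp_one, RCLike.ofReal_one, Function.const_one,
      Pi.one_def, diagonal_one, map_one]
  · subst h
    ext i
    have : Nonempty ι := ⟨i⟩
    simpa [spectrum.one_eq] using hH.eigenvalues_mem_spectrum_real i

theorem re_det_le_exp_re_trace_sub_card (hH : H.PosSemidef) :
    RCLike.re H.det ≤ Real.exp (RCLike.re H.trace - Fintype.card ι) := by
  rw [re_det_eq_prod_eigenvalues hH.isHermitian,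
    re_trace_sub_card_eq_sum_eigenvalues_sub_one hH.isHermitian]
  exact prod_le_exp_sum_sub_one fun i _ => hH.eigenvalues_nonneg i

theorem re_det_eq_exp_re_trace_sub_card_iff (hH : H.PosSemidef) :
    RCLike.re H.det = Real.exp (RCLike.re H.trace - Fintype.card ι) ↔ H = 1 := by
  rw [re_det_eq_prod_eigenvalues hH.isHermitian,
    re_trace_sub_card_eq_sum_eigenvalues_sub_one hH.isHermitian,
    prod_eq_exp_sum_sub_one_iff fun i _ => hH.eigenvalues_nonneg i,
    ← eigenvalues_eq_one_iff hH.isHermitian]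
  simp [funext_iff]

theorem re_det_le_one_of_re_trace_le_card (hH : H.PosSemidef)
    (htr : RCLike.re H.trace ≤ Fintype.card ι) : RCLike.re H.det ≤ 1 :=
  (re_det_le_exp_re_trace_sub_card hH).trans (Real.exp_le_one_iff.mpr (sub_nonpos.mpr htr))

theorem det_eq_one_iff_of_re_trace_le_card (hH : H.PosSemidef)
    (htr : RCLike.re H.trace ≤ Fintype.card ι) : H.det = 1 ↔ H = 1 := by
  refine ⟨fun hdet => ?_, fun h => h ▸ det_one⟩
  rw [← re_det_eq_exp_re_trace_sub_card_iff hH]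
  refine (re_det_le_exp_re_trace_sub_card hH).antisymm ?_
  calc Real.exp (RCLike.re H.trace - Fintype.card ι)
      ≤ 1 := Real.exp_le_one_iff.mpr (sub_nonpos.mpr htr)
    _ = RCLike.re H.det := by rw [hdet, RCLike.one_re]

end Hermitian

theorem trace_eq_zero_of_transpose_eq_neg {ι R : Type*} [Fintype ι] [AddCommGroup R]
    [IsAddTorsionFree R] {A : Matrix ι ι R} (hA : Aᵀ = -A) : A.trace = 0 := by
  rw [← self_eq_neg, ← trace_neg, ← hA, trace_transpose]

theorem trace_I_smul_map_ofReal_eq_zero {ι : Type*} [Fintype ι] {A : Matrix ι ι ℝ}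
    (hA : Aᵀ = -A) : (Complex.I • A.map Complex.ofReal).trace = 0 := by
  have hmap : (A.map Complex.ofReal).trace = A.trace := by simp [trace]
  rw [trace_smul, hmap, trace_eq_zero_of_transpose_eq_neg hA, Complex.ofReal_zero, smul_zero]

theorem isHermitian_I_smul_map_ofReal {ι : Type*} {A : Matrix ι ι ℝ} (hA : Aᵀ = -A) :
    (Complex.I • A.map Complex.ofReal).IsHermitian := by
  ext i j
  have hij : A j i = -A i j := congrFun₂ hA i j
  simp [hij]

theorem I_smul_map_ofReal_eq_zero_iff {m n : Type*} {A : Matrix m n ℝ} :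
    Complex.I • A.map Complex.ofReal = 0 ↔ A = 0 := by
  simp [← Matrix.ext_iff]

theorem stmt7_general {𝕜 ι : Type*} [RCLike 𝕜] [Fintype ι] [DecidableEq ι] {K : Matrix ι ι 𝕜}
    (hK : K.IsHermitian) (htr : 0 ≤ RCLike.re K.trace) :
    ((1 - K).IsHermitian ∧ RCLike.im (1 - K).det = 0) ∧
      ((1 - K).PosDef → 0 < RCLike.re (1 - K).det) ∧
        ((1 - K).PosSemidef → RCLike.re (1 - K).det ≤ 1 ∧ ((1 - K).det = 1 ↔ K = 0)) := by
  have hH : (1 - K).IsHermitian := isHermitian_one.sub hK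
  have htr' : RCLike.re (1 - K).trace ≤ Fintype.card ι := by simpa [trace_sub] using htr
  refine ⟨⟨hH, im_det_eq_zero_of_isHermitian hH⟩, fun hP => (RCLike.pos_iff.mp hP.det_pos).1,
    fun hP => ⟨re_det_le_one_of_re_trace_le_card hP htr', ?_⟩⟩
  rw [det_eq_one_iff_of_re_trace_le_card hP htr', sub_eq_self]

/-- For a real antisymmetric matrix `A`, the matrix `H = Iₙ − i·A` is Hermitian with real
determinant; if moreover `H` is positive definite then `0 < det H ≤ 1`, with equality
`det H = 1` if and only if `A = 0`. -/
theorem stmt7 {n : ℕ} (A : Matrix (Fin n) (Fin n) ℝ) (hA : Aᵀ = -A) :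
    ((hermOf A).IsHermitian ∧ ((hermOf A).det).im = 0) ∧
      ((hermOf A).PosDef →
        0 < ((hermOf A).det).re ∧ ((hermOf A).det).re ≤ 1 ∧
          ((hermOf A).det = 1 ↔ A = 0)) := by
  obtain ⟨hreal, hpos, hle⟩ := stmt7_general (isHermitian_I_smul_map_ofReal hA)
    (by rw [trace_I_smul_map_ofReal_eq_zero hA, map_zero])
  rw [I_smul_map_ofReal_eq_zero_iff] at hle
  exact ⟨hreal, fun hP => ⟨hpos hP, hle hP.posSemidef⟩⟩
end

section
/- Let V be a finite-dimensional complex inner product space with dim_ℂ V = n, Hermitian inner product h, g = Re h and ω = −Im h, and let Ω be a normalized complex volume form on V. Then for any vectors e₁, …, eₙ ∈ V that are orthonormal with respect to the real inner product g, one has |Ω(e₁, …, eₙ)| ≤ 1, with equality if and only if ω(eᵢ, eⱼ) = 0 for all i, j, i.e. if and only if the real span of e₁, …, eₙ is a Lagrangian subspace. -/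
/-!
This is the equality case of Hadamard's inequality. The value of an alternating top form on an
orthonormal basis does not depend on the basis, up to a scalar of modulus one. Expanding `Ω v` in
the Gram–Schmidt basis `b` of `v` gives a triangular determinant, so `‖Ω v‖` is
`∏ ‖⟪b i, v i⟫‖` up to normalization. Cauchy–Schwarz in each factor yields the inequality, and
equality forces each `v i` onto the line of `b i`, so the `v i` are Hermitian orthogonal. For
vectors already orthogonal for `Re h`, this says that `Im h` vanishes on them.
-/

section AlternatingMap

variable {𝕜 ι : Type*} [NormedField 𝕜] [Fintype ι]

theorem norm_alternatingMap_eq_mul_norm_det {M : Type*} [AddCommGroup M] [Module 𝕜 M]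
    [DecidableEq ι] (u : Module.Basis ι 𝕜 M) (Ω : M [⋀^ι]→ₗ[𝕜] 𝕜) (v : ι → M) :
    ‖Ω v‖ = ‖Ω u‖ * ‖u.det v‖ := by
  conv_lhs => rw [Ω.eq_smul_basis_det u]
  rw [AlternatingMap.smul_apply, norm_smul]

theorem norm_alternatingMap_eq_mul_prod_norm_of_eq_zero {V : Type*} [NormedAddCommGroup V]
    [Module 𝕜 V] (u : ι → V) (Ω : V [⋀^ι]→ₗ[𝕜] 𝕜) {v : ι → V} {i : ι} (hi : v i = 0) :
    ‖Ω v‖ = ‖Ω u‖ * ∏ j, ‖v j‖ := by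
  have hprod : ∏ j, ‖v j‖ = 0 := Finset.prod_eq_zero (Finset.mem_univ i) (by rw [hi, norm_zero])
  rw [Ω.map_coord_zero i hi, norm_zero, hprod, mul_zero]

end AlternatingMap

section Hadamard

open Module

variable {𝕜 V ι : Type*} [RCLike 𝕜] [NormedAddCommGroup V] [InnerProductSpace 𝕜 V]

theorem norm_inner_le_norm_of_norm_eq_one {x : V} (hx : ‖x‖ = 1) (y : V) :
    ‖inner 𝕜 x y‖ ≤ ‖y‖ := by
  simpa only [hx, one_mul] using norm_inner_le_norm (𝕜 := 𝕜) x y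

theorem pairwise_inner_eq_zero_of_norm_inner_eq_norm {b v : ι → V} (hb : Orthonormal 𝕜 b)
    (h : ∀ i, ‖inner 𝕜 (b i) (v i)‖ = ‖v i‖) :
    Pairwise fun i j => inner 𝕜 (v i) (v j) = 0 := by
  have hline : ∀ i, ∃ r : 𝕜, v i = r • b i := fun i => by
    have hCS : b i = 0 ∨ ∃ r : 𝕜, v i = r • b i :=
      ((norm_inner_eq_norm_tfae 𝕜 (b i) (v i)).out 0 2).1 (by rw [h, hb.norm_eq_one, one_mul])
    exact hCS.resolve_left (hb.ne_zero i)
  choose r hr using hline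
  intro i j hij
  rw [hr i, hr j, inner_smul_left, inner_smul_right, hb.inner_eq_zero hij, mul_zero, mul_zero]

theorem norm_eq_one_of_re_inner_self_eq_one {x : V} (hx : RCLike.re (inner 𝕜 x x) = 1) :
    ‖x‖ = 1 := by
  rw [norm_eq_sqrt_re_inner (𝕜 := 𝕜), hx, Real.sqrt_one]

theorem orthonormal_iff_im_inner_eq_zero [DecidableEq ι] {v : ι → V}
    (hre : ∀ i j, RCLike.re (inner 𝕜 (v i) (v j)) = if i = j then 1 else 0) :
    Orthonormal 𝕜 v ↔ ∀ i j, RCLike.im (inner 𝕜 (v i) (v j)) = 0 := by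
  refine ⟨fun hv i j => ?_, fun him => orthonormal_iff_ite.2 fun i j => RCLike.ext ?_ ?_⟩
  · rw [orthonormal_iff_ite.1 hv i j]
    split_ifs <;> simp
  · rw [hre i j]
    split_ifs <;> simp
  · rw [him i j]
    split_ifs <;> simp

variable [Fintype ι]

theorem exists_orthonormalBasis_det_eq_prod_inner [DecidableEq ι] [FiniteDimensional 𝕜 V]
    (hcard : finrank 𝕜 V = Fintype.card ι) (v : ι → V) :
    ∃ b : OrthonormalBasis ι 𝕜 V, b.toBasis.det v = ∏ i, inner 𝕜 (b i) (v i) := by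
  -- Gram–Schmidt needs an order on the index set; any linear order will do.
  let : LinearOrder ι := LinearOrder.lift' (Fintype.equivFin ι) (Fintype.equivFin ι).injective
  let : LocallyFiniteOrderBot ι := .ofIic ι (fun a => {x | x ≤ a}) (by simp)
  exact ⟨_, InnerProductSpace.gramSchmidtOrthonormalBasis_det hcard v⟩

theorem norm_alternatingMap_orthonormalBasis_eq (u b : OrthonormalBasis ι 𝕜 V)
    (Ω : V [⋀^ι]→ₗ[𝕜] 𝕜) : ‖Ω b‖ = ‖Ω u‖ := by
  classical
  rw [norm_alternatingMap_eq_mul_norm_det u.toBasis, u.det_to_matrix_orthonormalBasis, mul_one,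
    u.coe_toBasis]

theorem exists_orthonormalBasis_norm_alternatingMap_eq_mul_prod (u : OrthonormalBasis ι 𝕜 V)
    (Ω : V [⋀^ι]→ₗ[𝕜] 𝕜) (v : ι → V) :
    ∃ b : OrthonormalBasis ι 𝕜 V, ‖Ω v‖ = ‖Ω u‖ * ∏ i, ‖inner 𝕜 (b i) (v i)‖ := by
  classical
  have : FiniteDimensional 𝕜 V := u.toBasis.finiteDimensional_of_finite
  obtain ⟨b, hb⟩ :=
    exists_orthonormalBasis_det_eq_prod_inner (finrank_eq_card_basis u.toBasis) v
  refine ⟨b, ?_⟩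
  rw [norm_alternatingMap_eq_mul_norm_det b.toBasis, hb, norm_prod, b.coe_toBasis,
    norm_alternatingMap_orthonormalBasis_eq u b]

theorem norm_alternatingMap_le_mul_prod_norm (u : OrthonormalBasis ι 𝕜 V) (Ω : V [⋀^ι]→ₗ[𝕜] 𝕜)
    (v : ι → V) : ‖Ω v‖ ≤ ‖Ω u‖ * ∏ i, ‖v i‖ := by
  obtain ⟨b, hb⟩ := exists_orthonormalBasis_norm_alternatingMap_eq_mul_prod u Ω v
  rw [hb]
  gcongr with i
  exact norm_inner_le_norm_of_norm_eq_one (b.norm_eq_one i) (v i)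

theorem norm_alternatingMap_eq_mul_prod_norm_of_pairwise_inner_eq_zero (u : OrthonormalBasis ι 𝕜 V)
    (Ω : V [⋀^ι]→ₗ[𝕜] 𝕜) {v : ι → V} (hv : Pairwise fun i j => inner 𝕜 (v i) (v j) = 0) :
    ‖Ω v‖ = ‖Ω u‖ * ∏ i, ‖v i‖ := by
  by_cases! h0 : ∃ i, v i = 0
  · obtain ⟨i, hi⟩ := h0
    exact norm_alternatingMap_eq_mul_prod_norm_of_eq_zero u Ω hi
  let w : ι → V := fun i => (‖v i‖⁻¹ : 𝕜) • v i
  have hw : Orthonormal 𝕜 w := ⟨fun i => norm_smul_inv_norm (h0 i), fun i j hij => by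
    simp only [w, inner_smul_left, inner_smul_right, hv hij, mul_zero]⟩
  have : FiniteDimensional 𝕜 V := u.toBasis.finiteDimensional_of_finite
  have hspan : Submodule.span 𝕜 (Set.range w) = ⊤ :=
    hw.linearIndependent.span_eq_top_of_card_eq_finrank' (finrank_eq_card_basis u.toBasis).symm
  have hΩw : ‖Ω w‖ = ‖Ω u‖ := by
    simpa only [OrthonormalBasis.coe_mk] using
      norm_alternatingMap_orthonormalBasis_eq u (OrthonormalBasis.mk hw hspan.ge) Ω
  have hvw : v = fun i => (‖v i‖ : 𝕜) • w i := funext fun i =>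
    (smul_inv_smul₀ (RCLike.ofReal_ne_zero.2 (norm_ne_zero_iff.2 (h0 i))) (v i)).symm
  calc ‖Ω v‖ = ‖(∏ i, (‖v i‖ : 𝕜)) • Ω w‖ := by rw [← Ω.map_smul_univ, ← hvw]
    _ = ‖Ω u‖ * ∏ i, ‖v i‖ := by simp only [norm_smul, norm_prod, norm_algebraMap', norm_norm,
        hΩw, mul_comm]

theorem pairwise_inner_eq_zero_of_norm_alternatingMap_eq_mul_prod_norm (u : OrthonormalBasis ι 𝕜 V)
    {Ω : V [⋀^ι]→ₗ[𝕜] 𝕜} (hΩ : Ω ≠ 0) {v : ι → V} (h0 : ∀ i, v i ≠ 0)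
    (h : ‖Ω v‖ = ‖Ω u‖ * ∏ i, ‖v i‖) : Pairwise fun i j => inner 𝕜 (v i) (v j) = 0 := by
  obtain ⟨b, hb⟩ := exists_orthonormalBasis_norm_alternatingMap_eq_mul_prod u Ω v
  have hΩu : ‖Ω u‖ ≠ 0 := by
    rwa [← u.coe_toBasis, norm_ne_zero_iff, Ω.map_basis_ne_zero_iff]
  have hprod : ∏ i, ‖inner 𝕜 (b i) (v i)‖ = ∏ i, ‖v i‖ :=
    mul_left_cancel₀ hΩu (hb.symm.trans h)
  have hpos : ∀ i, 0 < ‖inner 𝕜 (b i) (v i)‖ := fun i => by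
    have hne : ∏ i, ‖inner 𝕜 (b i) (v i)‖ ≠ 0 :=
      hprod ▸ Finset.prod_ne_zero_iff.2 fun i _ => norm_ne_zero_iff.2 (h0 i)
    exact (norm_nonneg _).lt_of_ne' (Finset.prod_ne_zero_iff.1 hne i (Finset.mem_univ i))
  have hle : ∀ i, ‖inner 𝕜 (b i) (v i)‖ ≤ ‖v i‖ := fun i =>
    norm_inner_le_norm_of_norm_eq_one (b.norm_eq_one i) (v i)
  refine pairwise_inner_eq_zero_of_norm_inner_eq_norm b.orthonormal fun i => ?_
  by_contra hi
  exact (Finset.prod_lt_prod (fun i _ => hpos i) (fun i _ => hle i)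
    ⟨i, Finset.mem_univ i, (hle i).lt_of_ne hi⟩).ne hprod

theorem stmt10_general (u : OrthonormalBasis ι 𝕜 V) {Ω : V [⋀^ι]→ₗ[𝕜] 𝕜} (hΩ : Ω ≠ 0)
    (v : ι → V) :
    ‖Ω v‖ ≤ ‖Ω u‖ * ∏ i, ‖v i‖ ∧
      (‖Ω v‖ = ‖Ω u‖ * ∏ i, ‖v i‖ ↔
        (∃ i, v i = 0) ∨ Pairwise fun i j => inner 𝕜 (v i) (v j) = 0) := by
  refine ⟨norm_alternatingMap_le_mul_prod_norm u Ω v, fun h => ?_, ?_⟩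
  · refine or_iff_not_imp_left.2 fun h0 => ?_
    exact pairwise_inner_eq_zero_of_norm_alternatingMap_eq_mul_prod_norm u hΩ (not_exists.1 h0) h
  · rintro (⟨i, hi⟩ | hv)
    · exact norm_alternatingMap_eq_mul_prod_norm_of_eq_zero u Ω hi
    · exact norm_alternatingMap_eq_mul_prod_norm_of_pairwise_inner_eq_zero u Ω hv

theorem norm_alternatingMap_le_one_and_eq_one_iff_orthonormal (u : OrthonormalBasis ι 𝕜 V)
    {Ω : V [⋀^ι]→ₗ[𝕜] 𝕜} (hΩ : ‖Ω u‖ = 1) {v : ι → V} (hv : ∀ i, ‖v i‖ = 1) :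
    ‖Ω v‖ ≤ 1 ∧ (‖Ω v‖ = 1 ↔ Orthonormal 𝕜 v) := by
  have hΩ0 : Ω ≠ 0 := by
    rintro rfl
    simp at hΩ
  have hv0 : ∀ i, v i ≠ 0 := fun i => norm_ne_zero_iff.1 (by simp [hv])
  simpa only [hΩ, hv, hv0, Finset.prod_const_one, mul_one, exists_false, false_or, Orthonormal,
    implies_true, true_and] using stmt10_general u hΩ0 v

end Hadamard

/-- If `Ω` is a normalized complex volume form on an `n`-dimensional complex inner product
space `(V, h)` and `e₁, …, eₙ` are orthonormal for the real inner product `g = Re h`, then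
`|Ω(e₁,…,eₙ)| ≤ 1`, with equality if and only if `ω(eᵢ,eⱼ) = 0` for all `i, j`
(where `ω = −Im h`), i.e. iff the real span of the `eᵢ` is Lagrangian. -/
theorem stmt10 {V : Type*} [NormedAddCommGroup V] [InnerProductSpace ℂ V]
    [FiniteDimensional ℂ V] {n : ℕ} (hn : Module.finrank ℂ V = n)
    (Ω : AlternatingMap ℂ V ℂ (Fin n))
    (u : Fin n → V) (hu : Orthonormal ℂ u)
    (hspan : Submodule.span ℂ (Set.range u) = ⊤)
    (hΩ : ‖Ω u‖ = 1)
    (e : Fin n → V)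
    (hON : ∀ i j, (inner ℂ (e i) (e j) : ℂ).re = if i = j then 1 else 0) :
    ‖Ω e‖ ≤ 1 ∧
      (‖Ω e‖ = 1 ↔ ∀ i j, (inner ℂ (e i) (e j) : ℂ).im = 0) := by
  obtain ⟨hle, heq⟩ := norm_alternatingMap_le_one_and_eq_one_iff_orthonormal
    (OrthonormalBasis.mk hu hspan.ge) (by rwa [OrthonormalBasis.coe_mk])
    fun i => norm_eq_one_of_re_inner_self_eq_one (𝕜 := ℂ) ((hON i i).trans (if_pos rfl))
  exact ⟨hle, heq.trans (orthonormal_iff_im_inner_eq_zero hON)⟩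
end
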